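/- arXiv:1511.03746 — 3 statements merged into one kernel-verified Lean document; each statement's English description precedes it below -/
import Mathlib

section
/- Let V be a real normed vector space and Q : V → ℝ a continuous functional that is 2-homogeneous, i.e. Q(t • v) = t² · Q(v) for all t ∈ ℝ and v ∈ V. Let B ∈ V with Q(B) = c and c ≠ 0, and let U be any neighborhood of B in V. Then there exists ε > 0 such that any two points B₀, B₁ ∈ V with ‖B₀ − B‖ < ε, ‖B₁ − B‖ < ε and Q(B₀) = Q(B₁) = c can be joined by a continuous path γ : [0,1] → V with γ(0) = B₀, γ(1) = B₁, γ(u) ∈ U and Q(γ(u)) = c for all u ∈ [0,1]. -/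
/-!
The radial rescaling `F v = √(c / Q v) • v` satisfies `Q (F v) = c` wherever `c / Q v > 0`, by
2-homogeneity, and it fixes every point of the level set `Q = c`. It is continuous near `B` because
`Q B = c ≠ 0`, so some ball around `B` is mapped by `F` into `U`. Balls are convex: the segment from
`B₀` to `B₁` stays in the ball, and its image under `F` is the required path.
-/

/-- any two points of the level set `Q = c` (`c ≠ 0`) of a continuous
2-homogeneous functional that are sufficiently close to a given point `B` of this
level set can be joined by a continuous path staying in a given neighborhood `U`
of `B` and in the level set. -/
theorem helicity_level_set_locally_connected
    {V : Type*} [NormedAddCommGroup V] [NormedSpace ℝ V]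
    (Q : V → ℝ) (hQcont : Continuous Q)
    (hQhom : ∀ (t : ℝ) (v : V), Q (t • v) = t ^ 2 * Q v)
    (B : V) (c : ℝ) (hB : Q B = c) (hc : c ≠ 0)
    (U : Set V) (hU : U ∈ nhds B) :
    ∃ ε > (0 : ℝ), ∀ B₀ B₁ : V, ‖B₀ - B‖ < ε → ‖B₁ - B‖ < ε →
      Q B₀ = c → Q B₁ = c →
      ∃ γ : ℝ → V, ContinuousOn γ (Set.Icc 0 1) ∧ γ 0 = B₀ ∧ γ 1 = B₁ ∧
        ∀ u ∈ Set.Icc (0 : ℝ) 1, γ u ∈ U ∧ Q (γ u) = c := by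
  have hBQ : Q B ≠ 0 := hB ▸ hc
  have hratio : ContinuousAt (fun v => c / Q v) B :=
    continuousAt_const.div hQcont.continuousAt hBQ
  have hF : ContinuousAt (fun v => √(c / Q v) • v) B := hratio.sqrt.smul continuousAt_id
  have hpos : ∀ᶠ v in nhds B, 0 < c / Q v :=
    hratio.eventually (lt_mem_nhds (by simp [hB, hc]))
  have hFU : ∀ᶠ v in nhds B, √(c / Q v) • v ∈ U :=
    hF.eventually_mem (by simpa [hB, hc] using hU)
  obtain ⟨ε, hε, hball⟩ := Metric.eventually_nhds_iff_ball.1 (hpos.and hFU)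
  refine ⟨ε, hε, fun B₀ B₁ h₀ h₁ hQ₀ hQ₁ => ?_⟩
  have hseg : ∀ u ∈ Set.Icc (0 : ℝ) 1, AffineMap.lineMap B₀ B₁ u ∈ Metric.ball B ε :=
    fun u hu => (convex_ball B ε).lineMap_mem (mem_ball_iff_norm.2 h₀) (mem_ball_iff_norm.2 h₁) hu
  -- `c / Q v > 0` also rules out the junk value `c / 0 = 0`.
  have hne : ∀ v ∈ Metric.ball B ε, Q v ≠ 0 := by
    intro v hv h0
    simpa [h0] using (hball v hv).1
  have hline : Continuous (fun u : ℝ => AffineMap.lineMap B₀ B₁ u) :=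
    AffineMap.lineMap_continuous
  refine ⟨fun u => √(c / Q (AffineMap.lineMap B₀ B₁ u)) • AffineMap.lineMap B₀ B₁ u,
    ?_, by simp [hQ₀, hc], by simp [hQ₁, hc], fun u hu => ⟨(hball _ (hseg u hu)).2, ?_⟩⟩
  · exact (continuousOn_const.div (hQcont.comp hline).continuousOn
      fun u hu => hne _ (hseg u hu)).sqrt.smul hline.continuousOn
  · rw [hQhom, Real.sq_sqrt (hball _ (hseg u hu)).1.le, div_mul_cancel₀ _ (hne _ (hseg u hu))]
end

section
/- Let K : ℝ³ → Alt²(ℝ³; ℝ) be a continuous map from ℝ³ to the space of alternating bilinear forms on ℝ³ (a continuous 2-form on ℝ³). Suppose K is invariant under all admissible shear maps: for every smooth compactly supported f : ℝ³ → ℝ with ∂f/∂z(w) > −1 for all w ∈ ℝ³, the shear map ψ_f(x,y,z) = (x, y, z + f(x,y,z)) satisfies K(ψ_f(w))(Dψ_f(w) v₁, Dψ_f(w) v₂) = K(w)(v₁, v₂) for all w, v₁, v₂ ∈ ℝ³, where Dψ_f(w) is the Fréchet derivative of ψ_f at w. Then K(w)(v, e₃) = 0 for all w, v ∈ ℝ³,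 where e₃ = (0,0,1); equivalently, writing K = L dy∧dz + M dz∧dx + N dx∧dy with continuous coefficient functions L, M, N, one has L ≡ 0 and M ≡ 0. -/
/-!
Fix a point `w₀`. A shear function that agrees with `ε (w j - w₀ j)` near `w₀` fixes `w₀`, and the
derivative of its shear there is `v ↦ v + ε (v j) e₃`. Cutting off by a bump function makes it
compactly supported, and then `∂f/∂z` is bounded, so a small `ε > 0` makes it admissible.
Invariance at `w₀`, tested on a vector `v` with `v j = 0` and on the `j`-th basis vector `b`, reads
`K(v, b + ε e₃) = K(v, b)`, so `K(v, e₃) = 0`. Every vector is a sum of one with vanishing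
`0`-th coordinate and one with vanishing `1`-st coordinate.
-/

/-- The shear map `ψ_f(x,y,z) = (x, y, z + f(x,y,z))` on `ℝ³`. -/
def shearMap (f : (Fin 3 → ℝ) → ℝ) : (Fin 3 → ℝ) → (Fin 3 → ℝ) :=
  fun w i => if i = 2 then w 2 + f w else w i

/-- The third standard basis vector `e₃ = (0,0,1)` of `ℝ³`. -/
def e₃ : Fin 3 → ℝ := fun i => if i = 2 then 1 else 0

/-- An admissible shear function vanishing at `w₀` whose differential there is a positive multiple
of the `j`-th coordinate functional. -/
lemma exists_admissible_shear (w₀ : Fin 3 → ℝ) (j : Fin 3) :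
    ∃ (f : (Fin 3 → ℝ) → ℝ) (ε : ℝ), 0 < ε ∧ ContDiff ℝ (⊤ : ℕ∞) f ∧ HasCompactSupport f ∧
      (∀ w, fderiv ℝ f w e₃ > -1) ∧ f w₀ = 0 ∧
      HasFDerivAt f (ε • ContinuousLinearMap.proj (R := ℝ) (φ := fun _ : Fin 3 => ℝ) j) w₀ := by
  let b : ContDiffBump w₀ := ⟨1, 2, one_pos, one_lt_two⟩
  let g : (Fin 3 → ℝ) → ℝ := fun w => b w * (w j - w₀ j)
  have hg : ContDiff ℝ (⊤ : ℕ∞) g :=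
    b.contDiff.mul ((contDiff_apply ℝ ℝ j).sub contDiff_const)
  have hgs : HasCompactSupport g := b.hasCompactSupport.mul_right
  have hg' : HasFDerivAt g
      (ContinuousLinearMap.proj (R := ℝ) (φ := fun _ : Fin 3 => ℝ) j) w₀ := by
    have h : HasFDerivAt (fun w : Fin 3 → ℝ => w j - w₀ j)
        (ContinuousLinearMap.proj (R := ℝ) (φ := fun _ : Fin 3 => ℝ) j) w₀ :=
      (hasFDerivAt_apply j w₀).sub_const _
    refine h.congr_of_eventuallyEq ?_
    filter_upwards [b.eventuallyEq_one] with w hw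
    simp [g, hw]
  obtain ⟨C, hC⟩ := (hgs.fderiv (𝕜 := ℝ)).exists_bound_of_continuous
    (hg.continuous_fderiv (by simp))
  have hC0 : 0 ≤ C := (norm_nonneg _).trans (hC w₀)
  have hD : 0 ≤ C * ‖e₃‖ := mul_nonneg hC0 (norm_nonneg _)
  have hε : 0 < (C * ‖e₃‖ + 1)⁻¹ := by positivity
  refine ⟨fun w => (C * ‖e₃‖ + 1)⁻¹ * g w, _, hε, contDiff_const.mul hg, hgs.mul_left,
    fun w => ?_, by simp [g], hg'.const_mul _⟩
  have hle : |fderiv ℝ g w e₃| ≤ C * ‖e₃‖ :=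
    ((fderiv ℝ g w).le_opNorm e₃).trans (mul_le_mul_of_nonneg_right (hC w) (norm_nonneg _))
  have hd : DifferentiableAt ℝ g w := hg.differentiable (by simp) w
  rw [(hd.hasFDerivAt.const_mul _).fderiv, smul_apply, smul_eq_mul,
    inv_mul_eq_div, gt_iff_lt, lt_div_iff₀ (by positivity)]
  linarith [neg_abs_le (fderiv ℝ g w e₃)]

lemma shearMap_eq (f : (Fin 3 → ℝ) → ℝ) : shearMap f = fun w => w + f w • e₃ := by
  funext w i
  by_cases h : i = 2
  · subst h; simp [shearMap, e₃]
  · simp [shearMap, e₃, h]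

lemma fderiv_shearMap_apply {f : (Fin 3 → ℝ) → ℝ} {f' : (Fin 3 → ℝ) →L[ℝ] ℝ} {w : Fin 3 → ℝ}
    (hf : HasFDerivAt f f' w) (v : Fin 3 → ℝ) :
    fderiv ℝ (shearMap f) w v = v + f' v • e₃ := by
  have h : HasFDerivAt (fun w => w + f w • e₃) _ w := (hasFDerivAt_id w).add (hf.smul_const e₃)
  rw [shearMap_eq, h.fderiv]
  simp

/-- a continuous 2-form `K` on `ℝ³` (encoded as a continuous family of
alternating bilinear forms) invariant under all admissible shear maps satisfies
`K(w)(v, e₃) = 0` for all `w, v`, i.e. its `dy∧dz` and `dz∧dx` components vanish. -/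
theorem invariant_two_form_contracts_to_zero_on_e₃
    (K : (Fin 3 → ℝ) → (Fin 3 → ℝ) →L[ℝ] (Fin 3 → ℝ) →L[ℝ] ℝ)
    (hKcont : Continuous K)
    (hKalt : ∀ (w v : Fin 3 → ℝ), K w v v = 0)
    (hinv : ∀ f : (Fin 3 → ℝ) → ℝ, ContDiff ℝ (⊤ : ℕ∞) f → HasCompactSupport f →
      (∀ w : Fin 3 → ℝ, fderiv ℝ f w e₃ > -1) →
      ∀ (w v₁ v₂ : Fin 3 → ℝ),
        K (shearMap f w) (fderiv ℝ (shearMap f) w v₁) (fderiv ℝ (shearMap f) w v₂)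
          = K w v₁ v₂) :
    ∀ (w v : Fin 3 → ℝ), K w v e₃ = 0 := by
  have key : ∀ (w v : Fin 3 → ℝ) (j : Fin 3), v j = 0 → K w v e₃ = 0 := by
    intro w v j hv
    obtain ⟨f, ε, hε, hf, hfs, hfz, hf0, hf'⟩ := exists_admissible_shear w j
    have h := hinv f hf hfs hfz w v (Pi.single j 1)
    rw [fderiv_shearMap_apply hf', fderiv_shearMap_apply hf', shearMap_eq] at h
    simpa [hf0, hv, hε.ne'] using h
  intro w v
  have hsplit : v = Pi.single 0 (v 0) + (v - Pi.single 0 (v 0)) := by simp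
  rw [hsplit, map_add, add_apply, key w _ 1 (by simp), key w _ 0 (by simp),
    add_zero]
end

section
/- Let K : ℝ³ → Alt²(ℝ³; ℝ) be a continuous map from ℝ³ to the space of alternating bilinear forms on ℝ³ (a continuous 2-form on ℝ³). Suppose K is invariant under all admissible shear maps: for every smooth compactly supported f : ℝ³ → ℝ with ∂f/∂z(w) > −1 for all w ∈ ℝ³, the shear map ψ_f(x,y,z) = (x, y, z + f(x,y,z)) satisfies K(ψ_f(w))(Dψ_f(w) v₁, Dψ_f(w) v₂) = K(w)(v₁, v₂) for all w, v₁, v₂ ∈ ℝ³, where Dψ_f(w) is the Fréchet derivative of ψ_f at w. Then there exists a continuous function N : ℝ² → ℝ such that K(x,y,z) = N(x,y) • ω₀ for all (x,y,z) ∈ ℝ³, where ω₀ is the alternating bilinear form ω₀(v, w) = v₁ w₂ − v₂ w₁ (the constant 2-form dx ∧ dy). In particular, at every point K is a scalar multiple of dx ∧ dy and the scalar is constant along each line parallel to the z-axis, i.e. along the integral curves of the field of kernels of dx ∧ dy. -/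
/-- The hypothesis that `K` is invariant under every admissible shear map. -/
def ShearInvariant (K : (Fin 3 → ℝ) → (Fin 3 → ℝ) →L[ℝ] (Fin 3 → ℝ) →L[ℝ] ℝ) : Prop :=
  ∀ f : (Fin 3 → ℝ) → ℝ, ContDiff ℝ (⊤ : ℕ∞) f → HasCompactSupport f →
    (∀ w : Fin 3 → ℝ, fderiv ℝ f w e₃ > -1) →
    ∀ (w v₁ v₂ : Fin 3 → ℝ),
      K (shearMap f w) (fderiv ℝ (shearMap f) w v₁) (fderiv ℝ (shearMap f) w v₂) = K w v₁ v₂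

/-- Small multiples of any test function are admissible: the derivative of a smooth compactly
supported function is bounded. -/
lemma exists_invariance_of_small
    {K : (Fin 3 → ℝ) → (Fin 3 → ℝ) →L[ℝ] (Fin 3 → ℝ) →L[ℝ] ℝ} (hinv : ShearInvariant K)
    {g : (Fin 3 → ℝ) → ℝ} (hg : ContDiff ℝ (⊤ : ℕ∞) g) (hgc : HasCompactSupport g) :
    ∃ δ > 0, ∀ c : ℝ, |c| < δ → ∀ w v₁ v₂ : Fin 3 → ℝ,
      K (w + (c * g w) • e₃) (v₁ + (c * fderiv ℝ g w v₁) • e₃)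
        (v₂ + (c * fderiv ℝ g w v₂) • e₃) = K w v₁ v₂ := by
  have hdiff : Differentiable ℝ g := hg.differentiable (by simp)
  have hcont : Continuous (fun w => fderiv ℝ g w e₃) :=
    (hg.continuous_fderiv (by simp)).clm_apply continuous_const
  obtain ⟨M, hM⟩ := (hgc.fderiv_apply ℝ e₃).exists_bound_of_continuous hcont
  have hM0 : 0 ≤ M := (norm_nonneg _).trans (hM 0)
  refine ⟨1 / (M + 1), by positivity, fun c hc w v₁ v₂ => ?_⟩
  have hder : ∀ w, HasFDerivAt (fun w => c * g w) (c • fderiv ℝ g w) w :=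
    fun w => (hdiff w).hasFDerivAt.const_mul c
  have hadm : ∀ w, fderiv ℝ (fun w => c * g w) w e₃ > -1 := by
    intro w
    rw [(hder w).fderiv]
    have h1 : |c * fderiv ℝ g w e₃| ≤ |c| * M := by
      rw [abs_mul]
      exact mul_le_mul_of_nonneg_left (hM w) (abs_nonneg c)
    have h2 : |c| * (M + 1) < 1 := (lt_div_iff₀ (by positivity)).1 hc
    have h3 := neg_abs_le (c * fderiv ℝ g w e₃)
    have h4 := abs_nonneg c
    simp only [smul_apply, smul_eq_mul]
    nlinarith
  have h := hinv (fun w => c * g w) (contDiff_const.mul hg) hgc.mul_left hadm w v₁ v₂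
  have hs : HasFDerivAt (fun w => w + (c * g w) • e₃)
      (ContinuousLinearMap.id ℝ _ + (c • fderiv ℝ g w).smulRight e₃) w :=
    (hasFDerivAt_id w).add ((hder w).smul_const e₃)
  rw [shearMap_eq, hs.fderiv] at h
  simpa using h

lemma apply_e₃_eq_zero
    {K : (Fin 3 → ℝ) → (Fin 3 → ℝ) →L[ℝ] (Fin 3 → ℝ) →L[ℝ] ℝ} (hinv : ShearInvariant K)
    (hKalt : ∀ w v : Fin 3 → ℝ, K w v v = 0) (p v : Fin 3 → ℝ) : K p e₃ v = 0 := by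
  let χ : ContDiffBump p := ⟨1, 2, one_pos, one_lt_two⟩
  have hlin : HasFDerivAt (fun w : Fin 3 → ℝ => w 2 - p 2)
      (ContinuousLinearMap.proj (R := ℝ) (φ := fun _ : Fin 3 => ℝ) 2) p :=
    (ContinuousLinearMap.proj (R := ℝ) (φ := fun _ : Fin 3 => ℝ) 2).hasFDerivAt.sub_const _
  have hg : ContDiff ℝ (⊤ : ℕ∞) (fun w => χ w * (w 2 - p 2)) :=
    χ.contDiff.mul ((contDiff_apply ℝ ℝ 2).sub contDiff_const)
  obtain ⟨δ, hδ, h⟩ := exists_invariance_of_small hinv hg χ.hasCompactSupport.mul_right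
  have hfd : fderiv ℝ (fun w => χ w * (w 2 - p 2)) p =
      ContinuousLinearMap.proj (R := ℝ) (φ := fun _ : Fin 3 => ℝ) 2 := by
    refine (hlin.congr_of_eventuallyEq ?_).fderiv
    filter_upwards [χ.eventuallyEq_one] with w hw
    simp [hw]
  have h' := h (δ / 2) (by rw [abs_of_pos (by positivity)]; linarith) p e₃ v
  have he : e₃ 2 = 1 := by simp [e₃]
  simp only [hfd, sub_self, mul_zero, zero_smul, add_zero, ContinuousLinearMap.proj_apply, he,
    map_add, map_smul, add_apply, smul_apply, hKalt,
    smul_eq_mul, mul_one] at h'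
  have h2 : δ / 2 * K p e₃ v = 0 := by linarith
  exact (mul_eq_zero.1 h2).resolve_left (by positivity)

lemma apply_add_smul_e₃
    {K : (Fin 3 → ℝ) → (Fin 3 → ℝ) →L[ℝ] (Fin 3 → ℝ) →L[ℝ] ℝ} (hinv : ShearInvariant K)
    (p : Fin 3 → ℝ) (t : ℝ) : K (p + t • e₃) = K p := by
  have hloc : ∀ q : Fin 3 → ℝ, ∃ δ > 0, ∀ c : ℝ, |c| < δ → K (q + c • e₃) = K q := by
    intro q
    let χ : ContDiffBump q := ⟨1, 2, one_pos, one_lt_two⟩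
    obtain ⟨δ, hδ, h⟩ := exists_invariance_of_small hinv χ.contDiff χ.hasCompactSupport
    have hfd : fderiv ℝ χ q = 0 := by
      rw [χ.eventuallyEq_one.fderiv_eq]
      simp
    refine ⟨δ, hδ, fun c hc => ?_⟩
    ext v₁ v₂ : 2
    have h' := h c hc q v₁ v₂
    have h1 : χ q = 1 := χ.eventuallyEq_one.eq_of_nhds
    simpa only [hfd, h1, mul_one, zero_apply, mul_zero, zero_smul,
      add_zero] using h'
  have hlc : IsLocallyConstant (fun s : ℝ => K (p + s • e₃)) := by
    rw [IsLocallyConstant.iff_eventually_eq]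
    intro s
    obtain ⟨δ, hδ, h⟩ := hloc (p + s • e₃)
    filter_upwards [Metric.ball_mem_nhds s hδ] with r hr
    have := h (r - s) (by simpa [Real.dist_eq] using hr)
    rwa [add_assoc, ← add_smul, add_sub_cancel] at this
  simpa using hlc.apply_eq_of_isPreconnected isPreconnected_univ (Set.mem_univ t)
    (Set.mem_univ (0 : ℝ))

/-- a continuous 2-form `K` on `ℝ³` (encoded as a continuous family of
alternating bilinear forms) invariant under all admissible shear maps is of the form
`K(x,y,z) = N(x,y) · dx ∧ dy` for a continuous function `N : ℝ² → ℝ`; in particular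
the scalar factor is constant along each line parallel to the z-axis. -/
theorem invariant_two_form_is_multiple_of_dx_dy
    (K : (Fin 3 → ℝ) → (Fin 3 → ℝ) →L[ℝ] (Fin 3 → ℝ) →L[ℝ] ℝ)
    (hKcont : Continuous K)
    (hKalt : ∀ (w v : Fin 3 → ℝ), K w v v = 0)
    (hinv : ∀ f : (Fin 3 → ℝ) → ℝ, ContDiff ℝ (⊤ : ℕ∞) f → HasCompactSupport f →
      (∀ w : Fin 3 → ℝ, fderiv ℝ f w e₃ > -1) →
      ∀ (w v₁ v₂ : Fin 3 → ℝ),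
        K (shearMap f w) (fderiv ℝ (shearMap f) w v₁) (fderiv ℝ (shearMap f) w v₂)
          = K w v₁ v₂) :
    ∃ N : ℝ × ℝ → ℝ, Continuous N ∧
      ∀ (w v₁ v₂ : Fin 3 → ℝ),
        K w v₁ v₂ = N (w 0, w 1) * (v₁ 0 * v₂ 1 - v₁ 1 * v₂ 0) := by
  have hinv' : ShearInvariant K := hinv
  have hskew : ∀ w u v, K w u v = -K w v u := by
    intro w u v
    have h := hKalt w (u + v)
    simp only [map_add, add_apply, hKalt] at h
    linarith
  refine ⟨fun q => K ![q.1, q.2, 0] ![1, 0, 0] ![0, 1, 0], ?_, fun w v₁ v₂ => ?_⟩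
  · have hc : Continuous (fun q : ℝ × ℝ => (![q.1, q.2, 0] : Fin 3 → ℝ)) := by
      refine continuous_pi fun i => ?_
      fin_cases i
      · exact continuous_fst
      · exact continuous_snd
      · exact continuous_const
    exact ((hKcont.comp hc).clm_apply continuous_const).clm_apply continuous_const
  · have hdec : ∀ v : Fin 3 → ℝ, v = v 0 • ![1, 0, 0] + v 1 • ![0, 1, 0] + v 2 • e₃ := by
      intro v
      funext i
      fin_cases i <;> simp [e₃]
    have hw : K w = K ![w 0, w 1, 0] := by
      rw [← apply_add_smul_e₃ hinv' ![w 0, w 1, 0] (w 2)]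
      congr 1
      funext i
      fin_cases i <;> simp [e₃]
    have hl := apply_e₃_eq_zero hinv' hKalt ![w 0, w 1, 0]
    have hr : ∀ v, K ![w 0, w 1, 0] v e₃ = 0 := fun v => by rw [hskew, hl, neg_zero]
    rw [hw]
    conv_lhs => rw [hdec v₁, hdec v₂]
    simp only [map_add, map_smul, add_apply, smul_apply,
      smul_eq_mul, hl, hr, hKalt]
    rw [hskew _ ![0, 1, 0] ![1, 0, 0]]
    ring
end
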